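/- arXiv:1511.07045 — 2 statements merged into one kernel-verified Lean document; each statement's English description precedes it below -/
import Mathlib

section
/- Let 𝔤' be a finite-dimensional real Lie algebra, 𝔤 ⊆ 𝔤' a Lie subalgebra, and 𝔞 ⊆ 𝔞' abelian subalgebras with 𝔞 ⊆ 𝔤 and 𝔞' ⊆ 𝔤'. For a linear functional α on 𝔞 set 𝔤_α = {X ∈ 𝔤 : [H, X] = α(H)X for all H ∈ 𝔞}, and for a linear functional β on 𝔞' set 𝔤'_β = {X ∈ 𝔤' : [H, X] = β(H)X for all H ∈ 𝔞'}. Assume 𝔤' is the direct sum of the subspaces 𝔤'_β as β ranges over the linear functionals on 𝔞'. Let Σ = {α ≠ 0 : 𝔤_α ≠ 0}, Σ' = {β ≠ 0 : 𝔤'_β ≠ 0}, and let Σ⁺ ⊆ Σ and Σ'⁺ ⊆ Σ' be subsets such that every β ∈ Σ' whose restriction β|_𝔞 belongs to Σ⁺ lies in Σ'⁺. Then the sum of the root spaces 𝔤_α over α ∈ Σ⁺ is contained in the sum of the root spaces 𝔤'_β over β ∈ Σ'⁺. -/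
/-!
Decompose `X ∈ 𝔤_α` as `X = ∑ X_β` with `X_β ∈ 𝔤'_β`. For `H ∈ 𝔞 ⊆ 𝔞'`, the vector
`⁅H, X⁆ = α(H) X` has `β`-component both `β(H) X_β` and `α(H) X_β`, so `X_β ≠ 0` forces
`β|_𝔞 = α` (`comp_inclusion_eq_of_component_ne_zero`). If `α ∈ Σ⁺`, such a `β` is nonzero because
`α` is, and it is a root because `X_β ≠ 0`, so `β ∈ Σ'⁺` by the compatibility of the two choices.
-/

/-- The root space of a subspace `g` of a Lie algebra `L`, for the adjoint action of an abelian
subalgebra `a` and a linear functional `α` on `a`: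
`{X ∈ g : ⁅H, X⁆ = α(H) • X for all H ∈ a}`. -/
def adRootSpace {L : Type*} [LieRing L] [LieAlgebra ℝ L]
    (g a : Submodule ℝ L) (α : a →ₗ[ℝ] ℝ) : Submodule ℝ L :=
  g ⊓ ⨅ x : a, Module.End.eigenspace (LieAlgebra.ad ℝ L (x : L)) (α x)

theorem mem_adRootSpace {L : Type*} [LieRing L] [LieAlgebra ℝ L]
    {g a : Submodule ℝ L} {α : a →ₗ[ℝ] ℝ} {X : L} :
    X ∈ adRootSpace g a α ↔ X ∈ g ∧ ∀ H : a, ⁅(H : L), X⁆ = α H • X := by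
  simp [adRootSpace, Submodule.mem_iInf]

/-- On a sum of root vectors, `ad H` scales the `β`-component by `β H`. -/
theorem lie_coeLinearMap {L : Type*} [LieRing L] [LieAlgebra ℝ L]
    (a' : Submodule ℝ L) [DecidableEq (↥a' →ₗ[ℝ] ℝ)] (H : a')
    (f : DirectSum (↥a' →ₗ[ℝ] ℝ) fun β => adRootSpace (⊤ : Submodule ℝ L) a' β) :
    ⁅(H : L), DirectSum.coeLinearMap (fun β => adRootSpace (⊤ : Submodule ℝ L) a' β) f⁆ =
      DirectSum.coeLinearMap (fun β => adRootSpace (⊤ : Submodule ℝ L) a' β)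
        (DFinsupp.mapRange.linearMap (fun β : ↥a' →ₗ[ℝ] ℝ =>
          β H • (LinearMap.id : adRootSpace (⊤ : Submodule ℝ L) a' β →ₗ[ℝ] _)) f) := by
  induction f using DirectSum.induction_on with
  | zero => simp
  | of β x =>
    have hx := (mem_adRootSpace.1 x.2).2 H
    have h : DFinsupp.mapRange.linearMap (fun β : ↥a' →ₗ[ℝ] ℝ =>
          β H • (LinearMap.id : adRootSpace (⊤ : Submodule ℝ L) a' β →ₗ[ℝ] _))
        (DirectSum.of (fun β => adRootSpace (⊤ : Submodule ℝ L) a' β) β x) =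
        DirectSum.of (fun β => adRootSpace (⊤ : Submodule ℝ L) a' β) β (β H • x) :=
      DFinsupp.mapRange_single (hf := fun _ => map_zero _)
    rw [h, DirectSum.coeLinearMap_of, DirectSum.coeLinearMap_of, hx]
    rfl
  | add f₁ f₂ h₁ h₂ => rw [map_add, lie_add, h₁, h₂, ← map_add, ← map_add]

/-- A functional `β` contributing to the decomposition of a vector of `𝔤_α` restricts to `α`. -/
theorem comp_inclusion_eq_of_component_ne_zero {L : Type*} [LieRing L] [LieAlgebra ℝ L]
    {g a a' : Submodule ℝ L} (haa' : a ≤ a') [DecidableEq (↥a' →ₗ[ℝ] ℝ)]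
    (hdecomp : DirectSum.IsInternal fun β : (↥a' →ₗ[ℝ] ℝ) =>
      adRootSpace (⊤ : Submodule ℝ L) a' β)
    {α : a →ₗ[ℝ] ℝ}
    (f : DirectSum (↥a' →ₗ[ℝ] ℝ) fun β => adRootSpace (⊤ : Submodule ℝ L) a' β)
    (hf : DirectSum.coeLinearMap (fun β => adRootSpace (⊤ : Submodule ℝ L) a' β) f ∈
      adRootSpace g a α)
    {β : ↥a' →ₗ[ℝ] ℝ} (hβ : f β ≠ 0) :
    β.comp (Submodule.inclusion haa') = α := by
  ext H
  have h := (mem_adRootSpace.1 hf).2 H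
  have h' := lie_coeLinearMap a' (Submodule.inclusion haa' H) f
  rw [Submodule.coe_inclusion, h, ← map_smul] at h'
  have h2 : α H • f β = β (Submodule.inclusion haa' H) • f β :=
    DFunLike.congr_fun (hdecomp.injective h') β
  exact (smul_left_injective ℝ hβ h2).symm

/-- Let `𝔤'` be a finite-dimensional real Lie algebra (here `L`), `𝔤 ⊆ 𝔤'` a
Lie subalgebra and `𝔞 ⊆ 𝔞'` abelian subalgebras with `𝔞 ⊆ 𝔤`.  Assume `𝔤'` is the direct sum of
its `𝔞'`-root spaces.  If `Σ⁺` (resp. `Σ'⁺`) is a set of nonzero functionals on `𝔞` (resp. `𝔞'`)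
with nonzero root space, and every root `β` of `(𝔤', 𝔞')` whose restriction to `𝔞` lies in `Σ⁺`
lies in `Σ'⁺`, then the sum of the `Σ⁺`-root spaces of `𝔤` is contained in the sum of the
`Σ'⁺`-root spaces of `𝔤'`. -/
theorem statement8 {L : Type*} [LieRing L] [LieAlgebra ℝ L] [FiniteDimensional ℝ L]
    (g : LieSubalgebra ℝ L)
    (a a' : Submodule ℝ L)
    (ha_sub : a ≤ g.toSubmodule)
    (haa' : a ≤ a')
    (ha_ab : ∀ x ∈ a, ∀ y ∈ a, ⁅x, y⁆ = 0)
    (ha'_ab : ∀ x ∈ a', ∀ y ∈ a', ⁅x, y⁆ = 0)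
    [DecidableEq (↥a' →ₗ[ℝ] ℝ)]
    (hdecomp : DirectSum.IsInternal fun β : (↥a' →ₗ[ℝ] ℝ) =>
      adRootSpace (⊤ : Submodule ℝ L) a' β)
    (Splus : Set (↥a →ₗ[ℝ] ℝ)) (S'plus : Set (↥a' →ₗ[ℝ] ℝ))
    (hSplus : ∀ α ∈ Splus, α ≠ 0 ∧ adRootSpace g.toSubmodule a α ≠ ⊥)
    (hS'plus : ∀ β ∈ S'plus, β ≠ 0 ∧ adRootSpace (⊤ : Submodule ℝ L) a' β ≠ ⊥)
    (hcompat : ∀ β : ↥a' →ₗ[ℝ] ℝ, β ≠ 0 → adRootSpace (⊤ : Submodule ℝ L) a' β ≠ ⊥ →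
      β.comp (Submodule.inclusion haa') ∈ Splus → β ∈ S'plus) :
    (⨆ α ∈ Splus, adRootSpace g.toSubmodule a α)
      ≤ ⨆ β ∈ S'plus, adRootSpace (⊤ : Submodule ℝ L) a' β := by
  refine iSup₂_le fun α hα X hX => ?_
  obtain ⟨f, rfl⟩ := hdecomp.surjective X
  change DirectSum.coeLinearMap (fun β => adRootSpace (⊤ : Submodule ℝ L) a' β) f ∈ _ at hX
  change DirectSum.coeLinearMap (fun β => adRootSpace (⊤ : Submodule ℝ L) a' β) f ∈ _
  classical
  rw [DirectSum.coeLinearMap_eq_dfinsuppSum]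
  refine Submodule.sum_mem _ fun β hβ => ?_
  have hfβ : f β ≠ 0 := DFinsupp.mem_support_iff.1 hβ
  have hres := comp_inclusion_eq_of_component_ne_zero haa' hdecomp f hX hfβ
  have hβ0 : β ≠ 0 := by
    rintro rfl
    exact (hSplus α hα).1 (by rw [← hres, LinearMap.zero_comp])
  have hroot : adRootSpace (⊤ : Submodule ℝ L) a' β ≠ ⊥ := fun h =>
    hfβ (Subtype.ext ((Submodule.mem_bot ℝ).1 (h ▸ (f β).2)))
  exact Submodule.mem_iSup_of_mem β
    (Submodule.mem_iSup_of_mem (hcompat β hβ0 hroot (hres ▸ hα)) (f β).2)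
end

section
/- Let (Γ_n)_{n≥1} be a sequence of nonempty finite sets together with surjective maps p_n : Γ_{n+1} → Γ_n, and let Γ = lim← Γ_n be the projective limit with the topology inherited from the product of the discrete spaces Γ_n. Then for every point x ∈ Γ there exists a Borel probability measure μ_x on Γ with full support such that μ_x({x}) ≥ 1/2 and μ_x({y}) = 0 for every non-isolated point y ∈ Γ with y ≠ x. -/
/-!
The projective limit is a closed subspace of a countable product of finite discrete spaces, hence
Polish, and the claim holds in every Polish space `X`.

Every nonempty open `U ⊆ X` has positive mass for some probability measure that gives no mass to
non-isolated points (`exists_isProbabilityMeasure_of_isOpen`). If `U` contains an isolated point,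
the Dirac mass there will do. Otherwise the Polish space `U` has no isolated point, so by the Baire
category theorem it is uncountable, hence Borel isomorphic to the unit interval, and Lebesgue
measure can be transported to it. Summing such measures over a countable base, with positive
weights of total mass `c < 1/2`, and adding the mass `1 - c` at `x` gives the measure `μ_x`.
-/

open MeasureTheory

/-- The projective limit of a sequence of sets `Γ n` along connecting maps
`p n : Γ (n+1) → Γ n`: the set of compatible sequences in the product. -/
def ProjLim (Γ : ℕ → Type) (p : ∀ n, Γ (n + 1) → Γ n) : Type :=
  {x : ∀ n, Γ n // ∀ n, p n (x (n + 1)) = x n}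

/-- The topology on the projective limit inherited from the product topology. -/
instance (Γ : ℕ → Type) [∀ n, TopologicalSpace (Γ n)] (p : ∀ n, Γ (n + 1) → Γ n) :
    TopologicalSpace (ProjLim Γ p) :=
  inferInstanceAs (TopologicalSpace {x : ∀ n, Γ n // ∀ n, p n (x (n + 1)) = x n})

/-- The Borel σ-algebra on the projective limit. -/
instance (Γ : ℕ → Type) [∀ n, TopologicalSpace (Γ n)] (p : ∀ n, Γ (n + 1) → Γ n) :
    MeasurableSpace (ProjLim Γ p) := borel _

/-- A Polish space without isolated points is empty or uncountable, by the Baire category theorem: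
otherwise it would be a countable union of closed sets (points) with empty interior. -/
lemma not_countable_of_forall_not_isOpen_singleton {X : Type*} [TopologicalSpace X]
    [PolishSpace X] [Nonempty X] (h : ∀ y : X, ¬ IsOpen ({y} : Set X)) : ¬ Countable X := by
  intro hc
  obtain ⟨y, hy⟩ := nonempty_interior_of_iUnion_of_closed (f := fun y : X => ({y} : Set X))
    (fun y => isClosed_singleton) (Set.iUnion_of_singleton X)
  refine h y ?_
  rcases Set.subset_singleton_iff_eq.1 (interior_subset (s := ({y} : Set X))) with h0 | h1
  · exact absurd hy (by simp [h0])
  · exact h1 ▸ isOpen_interior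

/-- An uncountable standard Borel space is Borel isomorphic to the unit interval, and Lebesgue
measure there has no atoms. -/
lemma exists_isProbabilityMeasure_noAtoms {X : Type*} [MeasurableSpace X] [StandardBorelSpace X]
    (h : ¬ Countable X) : ∃ ν : Measure X, IsProbabilityMeasure ν ∧ ∀ y, ν {y} = 0 := by
  have hI : ¬ Countable unitInterval := fun hc =>
    (Cardinal.mk_Icc_real (zero_lt_one' ℝ) ▸ Cardinal.aleph0_lt_continuum).not_ge
      (Cardinal.mk_le_aleph0_iff.2 hc)
  let e : unitInterval ≃ᵐ X := PolishSpace.measurableEquivOfNotCountable hI h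
  refine ⟨(volume : Measure unitInterval).map e,
    Measure.isProbabilityMeasure_map e.measurable.aemeasurable, fun y => ?_⟩
  rw [e.map_apply]
  exact (Set.subsingleton_singleton.preimage e.injective).measure_zero _

lemma exists_isProbabilityMeasure_of_isOpen {X : Type*} [TopologicalSpace X] [PolishSpace X]
    [MeasurableSpace X] [BorelSpace X] {U : Set X} (hU : IsOpen U) (hne : U.Nonempty) :
    ∃ ν : Measure X, IsProbabilityMeasure ν ∧ 0 < ν U ∧
      ∀ y : X, ¬ IsOpen ({y} : Set X) → ν {y} = 0 := by
  by_cases hiso : ∃ z ∈ U, IsOpen ({z} : Set X)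
  · obtain ⟨z, hzU, hz⟩ := hiso
    refine ⟨Measure.dirac z, inferInstance, by simp [hzU], fun y hy => ?_⟩
    have hzy : z ≠ y := fun h => hy (h ▸ hz)
    simp [hzy]
  · push Not at hiso
    have : PolishSpace U := hU.polishSpace
    have : Nonempty U := hne.to_subtype
    have hunc : ¬ Countable U := not_countable_of_forall_not_isOpen_singleton fun y hy =>
      hiso y y.2 (by simpa using hU.isOpenMap_subtype_val _ hy)
    obtain ⟨ν, hν, hν0⟩ := exists_isProbabilityMeasure_noAtoms hunc
    refine ⟨ν.map Subtype.val,
      Measure.isProbabilityMeasure_map measurable_subtype_coe.aemeasurable, ?_, fun y _ => ?_⟩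
    · rw [Measure.map_apply measurable_subtype_coe hU.measurableSet]
      simp
    · rw [Measure.map_apply measurable_subtype_coe (measurableSet_singleton y)]
      by_cases hy : y ∈ U
      · have : (Subtype.val ⁻¹' {y} : Set U) = {⟨y, hy⟩} := by ext; simp [Subtype.ext_iff]
        rw [this, hν0]
      · have : (Subtype.val ⁻¹' {y} : Set U) = ∅ := by
          ext z
          simp only [Set.mem_preimage, Set.mem_singleton_iff, Set.mem_empty_iff_false, iff_false]
          rintro rfl
          exact hy z.2
        rw [this, measure_empty]

/-- The theorem for an arbitrary Polish space. -/
lemma exists_isProbabilityMeasure_atom_at {X : Type*} [TopologicalSpace X] [PolishSpace X]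
    [MeasurableSpace X] [BorelSpace X] (x : X) :
    ∃ μ : Measure X, IsProbabilityMeasure μ ∧
      (∀ A : Set X, IsOpen A → A.Nonempty → 0 < μ A) ∧ (1 / 2 : ENNReal) ≤ μ {x} ∧
      ∀ y : X, ¬ IsOpen ({y} : Set X) → y ≠ x → μ {y} = 0 := by
  have : Countable (TopologicalSpace.countableBasis X) :=
    (TopologicalSpace.countable_countableBasis X).to_subtype
  choose ν hν hpos hzero using fun U : TopologicalSpace.countableBasis X =>
    exists_isProbabilityMeasure_of_isOpen (TopologicalSpace.isOpen_of_mem_countableBasis U.2)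
      (TopologicalSpace.nonempty_of_mem_countableBasis U.2)
  obtain ⟨w, hw, hsum⟩ := ENNReal.exists_pos_sum_of_countable' (ε := 1 / 2) (by simp)
    (TopologicalSpace.countableBasis X)
  set c := ∑' U, w U with hc
  have hc1 : c ≤ 1 := hsum.le.trans (by simp)
  refine ⟨(1 - c) • Measure.dirac x + Measure.sum fun U => w U • ν U, ⟨?_⟩, fun A hA hne => ?_, ?_,
    fun y hy hyx => ?_⟩
  · simp [Measure.sum_apply, ← hc, tsub_add_cancel_of_le hc1]
  · obtain ⟨a, ha⟩ := hne
    obtain ⟨U, hU, -, hUA⟩ :=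
      (TopologicalSpace.isBasis_countableBasis X).exists_subset_of_mem_open ha hA
    calc 0 < w ⟨U, hU⟩ * ν ⟨U, hU⟩ U := ENNReal.mul_pos (hw _).ne' (hpos ⟨U, hU⟩).ne'
      _ ≤ w ⟨U, hU⟩ * ν ⟨U, hU⟩ A := by gcongr
      _ = (w ⟨U, hU⟩ • ν ⟨U, hU⟩) A := by simp
      _ ≤ (Measure.sum fun U => w U • ν U) A := Measure.le_sum (fun U => w U • ν U) ⟨U, hU⟩ A
      _ ≤ _ := by rw [Measure.add_apply]; exact le_add_self
  · have h : (1 / 2 : ENNReal) ≤ 1 - c := by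
      refine ENNReal.le_sub_of_add_le_right (hsum.trans (by simp)).ne ?_
      calc (1 / 2 : ENNReal) + c ≤ 1 / 2 + 1 / 2 := by gcongr
        _ = 1 := ENNReal.add_halves 1
    rw [Measure.add_apply]
    exact le_add_right (by simpa using h)
  · simp [Measure.sum_apply, hzero _ y hy, hyx.symm]

/-- Let `(Γ n)` be nonempty finite sets with surjective connecting maps
`p n : Γ (n+1) → Γ n` and `Γ = lim← Γ n` with the topology inherited from the product of the
discrete spaces `Γ n`.  Then for every `x ∈ Γ` there is a Borel probability measure `μ_x` on `Γ`
with full support such that `μ_x {x} ≥ 1/2` and `μ_x {y} = 0` for every non-isolated `y ≠ x`. -/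
theorem statement10 (Γ : ℕ → Type) [∀ n, Finite (Γ n)] [∀ n, Nonempty (Γ n)]
    [∀ n, TopologicalSpace (Γ n)] [∀ n, DiscreteTopology (Γ n)]
    (p : ∀ n, Γ (n + 1) → Γ n) (hp : ∀ n, Function.Surjective (p n))
    (x : ProjLim Γ p) :
    ∃ μ : Measure (ProjLim Γ p), IsProbabilityMeasure μ ∧
      (∀ A : Set (ProjLim Γ p), IsOpen A → A.Nonempty → 0 < μ A) ∧
      (1 / 2 : ENNReal) ≤ μ {x} ∧
      ∀ y : ProjLim Γ p, ¬ IsOpen ({y} : Set (ProjLim Γ p)) → y ≠ x → μ {y} = 0 := by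
  have hclosed : IsClosed {x : ∀ n, Γ n | ∀ n, p n (x (n + 1)) = x n} := by
    simp only [Set.ofPred_forall]
    exact isClosed_iInter fun n => isClosed_eq
      (continuous_of_discreteTopology.comp (continuous_apply (n + 1))) (continuous_apply n)
  have : PolishSpace (ProjLim Γ p) := hclosed.polishSpace
  have : BorelSpace (ProjLim Γ p) := ⟨rfl⟩
  exact exists_isProbabilityMeasure_atom_at x
end
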